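/- Let n ≥ 3, let 1 ≤ m < n, and for each k ≥ 1 let F(k) be the subgroup of SL_n(ℤ) generated by U⁺(kℤ), U⁻(kℤ) and M(kℤ), regarded as a subgroup of SL_n(ℚ). Then for every x ∈ SL_n(ℚ) and every integer k ≥ 1 there exists an integer l = l(k,x) ≥ 1 such that x·F(k)·x⁻¹ contains F(l). -/

import Mathlib

/-!
Let `e_ij(q)` be the elementary matrices. The `x ∈ SL_n(ℚ)` with the required property form a
submonoid, and `SL_n(ℚ)` is generated by the `e_ab(q)`. Those with `a` and `b` in different blocks
suffice, since the others are commutators `e_ab(q) = ⁅e_ac(q), e_cb(1)⁆` through the other block.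

Let `x = e_ab(q)` be such a matrix and `l = (k d)²` with `d` the denominator of `q`. Since
`x⁻¹ g x = g ⁅g⁻¹, x⁻¹⁆`, it is enough that for the generators `g` of `F(l)` the commutator is a
product of elementary matrices with entries in `kℤ`, as these lie in `F(k)`.

* `g = e_ij(s)`: the Steinberg relations give the commutator unless `(i, j) = (b, a)`. Since
  `n ≥ 3`, there is a third index `c`, and `e_ba((k d)² t) = ⁅e_bc(k d), e_ca(k d t)⁆` reduces that
  case to the others. This is why `l` is a square.
* `g` block diagonal: with `x = 1 + X`, the commutator is `1 + (X - g⁻¹ X g)`, and `X - g⁻¹ X g` is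
  supported in the off-diagonal block of `X`. Its entries are in `kℤ` because `g` and `g⁻¹` are
  congruent to `1` modulo `l`.
-/

open Matrix

/-- `U⁺(kℤ)`: matrices `I + X` in `SL_n(ℤ)` with `X` supported in the top-right
`m × (n−m)` block and all entries of `X` divisible by `k`. -/
def Uplus (n m k : ℕ) : Set (Matrix.SpecialLinearGroup (Fin n) ℤ) :=
  {g | ∀ i j : Fin n, if i = j then g.1 i j = 1
      else if (i : ℕ) < m ∧ m ≤ (j : ℕ) then (k : ℤ) ∣ g.1 i j
      else g.1 i j = 0}

/-- `U⁻(kℤ)`: matrices `I + X` in `SL_n(ℤ)` with `X` supported in the bottom-left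
`(n−m) × m` block and all entries of `X` divisible by `k`. -/
def Uminus (n m k : ℕ) : Set (Matrix.SpecialLinearGroup (Fin n) ℤ) :=
  {g | ∀ i j : Fin n, if i = j then g.1 i j = 1
      else if m ≤ (i : ℕ) ∧ (j : ℕ) < m then (k : ℤ) ∣ g.1 i j
      else g.1 i j = 0}

/-- `M(kℤ)`: block diagonal matrices `diag(A, B)` in `SL_n(ℤ)` with `A ∈ SL_m(ℤ)`,
`B ∈ SL_{n−m}(ℤ)`, and both `A` and `B` congruent to the identity mod `k`. -/
def Mblock (n m k : ℕ) (h : m ≤ n) : Set (Matrix.SpecialLinearGroup (Fin n) ℤ) :=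
  {g | (∀ i j : Fin n, ¬((i : ℕ) < m ↔ (j : ℕ) < m) → g.1 i j = 0) ∧
       (∀ i j : Fin n, (k : ℤ) ∣ (g.1 i j - if i = j then 1 else 0)) ∧
       (Matrix.of fun i j : Fin m => g.1 (Fin.castLE h i) (Fin.castLE h j)).det = 1 ∧
       (Matrix.of fun i j : Fin (n - m) =>
          g.1 ⟨m + (i : ℕ), by have := i.2; omega⟩ ⟨m + (j : ℕ), by have := j.2; omega⟩).det = 1}

/-- `F(k)`: the subgroup of `SL_n(ℤ)` generated by `U⁺(kℤ)`, `U⁻(kℤ)` and `M(kℤ)`. -/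
def Fgroup (n m k : ℕ) (h : m ≤ n) : Subgroup (Matrix.SpecialLinearGroup (Fin n) ℤ) :=
  Subgroup.closure (Uplus n m k ∪ Uminus n m k ∪ Mblock n m k h)

/-- A subgroup of `SL_n(ℤ)` is a congruence subgroup if it contains a principal congruence
subgroup `SL_n(Nℤ)` for some `N ≥ 1`. -/
def IsCongruenceSubgroup (n : ℕ) (H : Subgroup (Matrix.SpecialLinearGroup (Fin n) ℤ)) : Prop :=
  ∃ N : ℕ, 1 ≤ N ∧ ∀ g : Matrix.SpecialLinearGroup (Fin n) ℤ,
    (∀ i j : Fin n, (N : ℤ) ∣ (g.1 i j - if i = j then 1 else 0)) → g ∈ H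

/-- `Γ_k`: the intersection of all congruence subgroups of `SL_n(ℤ)` containing `F(k)`. -/
def GammaCl (n m k : ℕ) (h : m ≤ n) : Subgroup (Matrix.SpecialLinearGroup (Fin n) ℤ) :=
  sInf {H | IsCongruenceSubgroup n H ∧ Fgroup n m k h ≤ H}

/-- `F(k)` regarded as a subgroup of `SL_n(ℚ)`, via the inclusion `SL_n(ℤ) → SL_n(ℚ)`. -/
def FgroupQ (n m k : ℕ) (h : m ≤ n) : Subgroup (Matrix.SpecialLinearGroup (Fin n) ℚ) :=
  Subgroup.closure
    (Matrix.SpecialLinearGroup.map (n := Fin n) (Int.castRingHom ℚ) ''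
      (Uplus n m k ∪ Uminus n m k ∪ Mblock n m k h))

open Matrix.SpecialLinearGroup MulAut
open scoped Pointwise commutatorElement

section Group

variable {G : Type*} [Group G]

lemma mem_conj_smul_of_commutator_mem {H : Subgroup G} {g x : G} (hg : g ∈ H)
    (hc : ⁅g⁻¹, x⁻¹⁆ ∈ H) : g ∈ conj x • H := by
  rw [Subgroup.mem_pointwise_smul_iff_inv_smul_mem, ← map_inv, MulAut.smul_def, conj_apply]
  convert mul_mem hg hc using 1
  rw [commutatorElement_def]
  group

/-- The submonoid of those `x` such that every `x F(k) x⁻¹` contains some `F(l)`, for a family of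
subgroups `F` indexed by positive levels. -/
def conjAbsorbing (F : ℕ → Subgroup G) : Submonoid G where
  carrier := {x | ∀ k, 1 ≤ k → ∃ l, 1 ≤ l ∧ F l ≤ conj x • F k}
  one_mem' k hk := ⟨k, hk, by rw [map_one, one_smul]⟩
  mul_mem' {x y} hx hy k hk := by
    obtain ⟨l, hl, hlk⟩ := hy k hk
    obtain ⟨r, hr, hrl⟩ := hx l hl
    refine ⟨r, hr, hrl.trans ?_⟩
    rw [map_mul, mul_smul]
    exact Subgroup.pointwise_smul_le_pointwise_smul_iff.2 hlk

end Group

section Transvection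

variable {ι R : Type*} [Fintype ι] [DecidableEq ι] [CommRing R]

lemma commute_transvection_transvection {i j k l : ι} (hij : i ≠ j) (hkl : k ≠ l) (hjk : j ≠ k)
    (hil : i ≠ l) (s t : R) :
    Commute (SpecialLinearGroup.transvection hij s) (SpecialLinearGroup.transvection hkl t) :=
  coeMonoidHom_injective <| by
    simp only [map_mul, coeMonoidHom_apply, transvection_coe, mul_add, add_mul, mul_one, one_mul,
      single_mul_single_of_ne _ _ _ _ hjk, single_mul_single_of_ne _ _ _ _ hil.symm]
    abel

lemma commutator_transvection_transvection {i j k : ι} (hij : i ≠ j) (hjk : j ≠ k) (hik : i ≠ k)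
    (s t : R) :
    ⁅SpecialLinearGroup.transvection hij s, SpecialLinearGroup.transvection hjk t⁆ =
      SpecialLinearGroup.transvection hik (s * t) :=
  coeMonoidHom_injective <| by
    simp only [commutatorElement_def, transvection_inv, map_mul, coeMonoidHom_apply,
      transvection_coe, mul_add, add_mul, mul_one, one_mul, single_mul_single_same,
      single_mul_single_of_ne _ _ _ _ hij.symm, single_mul_single_of_ne _ _ _ _ hjk.symm,
      single_mul_single_of_ne _ _ _ _ hik.symm, ← Matrix.single_neg, mul_neg, zero_mul,
      neg_mul]
    abel

lemma map_transvection {S : Type*} [CommRing S] (f : R →+* S) {i j : ι} (hij : i ≠ j) (s : R) :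
    SpecialLinearGroup.map f (SpecialLinearGroup.transvection hij s) =
      SpecialLinearGroup.transvection hij (f s) := by
  ext a b
  simp [transvection_coe, Matrix.one_apply, single_apply, apply_ite f]

-- Whitehead's factorization `w(a) w(-1)`, where `w(a) = e_ij(a) e_ji(-a⁻¹) e_ij(a)`.
lemma diag2n_eq_transvection_mul {K : Type*} [Field K] {i j : ι} (hij : i ≠ j) (a : K)
    (ha : a ≠ 0) :
    diag2n hij a ha = SpecialLinearGroup.transvection hij a *
      SpecialLinearGroup.transvection hij.symm (-a⁻¹) * SpecialLinearGroup.transvection hij a *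
      (SpecialLinearGroup.transvection hij (-1) * SpecialLinearGroup.transvection hij.symm 1 *
        SpecialLinearGroup.transvection hij (-1)) := by
  have diag : (diag2n hij a ha : Matrix ι ι K) = 1 + single i i (a - 1) + single j j (a⁻¹ - 1) := by
    ext x y
    simp only [diag2n_coe, diagonal_apply, Matrix.add_apply, Matrix.one_apply, single_apply]
    grind
  have single_eq (x y : ι) (c : K) : single x y c = c • single x y 1 := by simp
  apply coeMonoidHom_injective
  simp only [map_mul, coeMonoidHom_apply, diag, transvection_coe, mul_add, add_mul, mul_one,
    one_mul, single_mul_single_same, single_mul_single_of_ne _ _ _ _ hij, mul_zero, zero_mul,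
    single_mul_single_of_ne _ _ _ _ hij.symm]
  rw [single_eq i i, single_eq j j]
  simp only [single_eq _ _ (_ * _), single_eq _ _ (- _), single_eq _ _ a]
  match_scalars <;> field_simp <;> ring

lemma specialLinearGroup_transvection_induction {K : Type*} [Field K] [Nontrivial ι]
    {P : SpecialLinearGroup ι K → Prop}
    (transvection : ∀ (i j : ι) (hij : i ≠ j) (s : K), P (SpecialLinearGroup.transvection hij s))
    (mul : ∀ x y, P x → P y → P (x * y)) (x : SpecialLinearGroup ι K) : P x := by
  refine diagonal_transvection_induction' P x (fun i j hij a ha => ?_) transvection mul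
  rw [diag2n_eq_transvection_mul]
  refine mul _ _ (mul _ _ (mul _ _ ?_ ?_) ?_) (mul _ _ (mul _ _ ?_ ?_) ?_) <;> apply transvection

end Transvection

section ElementarySubgroup

variable {ι R : Type*} [Fintype ι] [DecidableEq ι] [CommRing R] {A : AddSubgroup R}

/-- The elementary subgroup of level `A`: it is generated by the transvections with coefficient in
`A`. The level is only an additive subgroup, so that `kℤ` can serve as a level inside `ℚ`. -/
def elementarySubgroup (ι : Type*) [Fintype ι] [DecidableEq ι] (A : AddSubgroup R) :
    Subgroup (SpecialLinearGroup ι R) :=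
  Subgroup.closure
    {g | ∃ (i j : ι) (hij : i ≠ j), ∃ s ∈ A, SpecialLinearGroup.transvection hij s = g}

lemma transvection_mem_elementarySubgroup {i j : ι} (hij : i ≠ j) {s : R} (hs : s ∈ A) :
    SpecialLinearGroup.transvection hij s ∈ elementarySubgroup ι A :=
  Subgroup.subset_closure ⟨i, j, hij, s, hs, rfl⟩

lemma elementarySubgroup_le_iff {H : Subgroup (SpecialLinearGroup ι R)} :
    elementarySubgroup ι A ≤ H ↔
      ∀ (i j : ι) (hij : i ≠ j), ∀ s ∈ A, SpecialLinearGroup.transvection hij s ∈ H := by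
  rw [elementarySubgroup, Subgroup.closure_le]
  exact ⟨fun h i j hij s hs => h ⟨i, j, hij, s, hs, rfl⟩,
    fun h _ ⟨i, j, hij, s, hs, hg⟩ => hg ▸ h i j hij s hs⟩

lemma exists_mem_elementarySubgroup_coe_eq_one_add_sum_single {p : ι → Prop} {N : Matrix ι ι R}
    (S : Finset (ι × ι)) (hS : ∀ e ∈ S, p e.1 ∧ ¬p e.2) (hN : ∀ e ∈ S, N e.1 e.2 ∈ A) :
    ∃ v ∈ elementarySubgroup ι A, (v : Matrix ι ι R) = 1 + ∑ e ∈ S, single e.1 e.2 (N e.1 e.2) := by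
  induction S using Finset.induction_on with
  | empty => exact ⟨1, one_mem _, by simp⟩
  | insert e S he ih =>
    rw [Finset.forall_mem_insert] at hS hN
    obtain ⟨v, hv, hvS⟩ := ih hS.2 hN.2
    have hne : e.1 ≠ e.2 := fun h => hS.1.2 (h ▸ hS.1.1)
    refine ⟨v * SpecialLinearGroup.transvection hne (N e.1 e.2),
      mul_mem hv (transvection_mem_elementarySubgroup hne hN.1), ?_⟩
    have sum_mul_single :
        (∑ f ∈ S, single f.1 f.2 (N f.1 f.2)) * single e.1 e.2 (N e.1 e.2) = 0 := by
      rw [Finset.sum_mul]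
      refine Finset.sum_eq_zero fun f hf => single_mul_single_of_ne _ _ _ _ ?_ _
      exact fun h => (hS.2 f hf).2 (h ▸ hS.1.1)
    rw [Matrix.SpecialLinearGroup.coe_mul, hvS, transvection_coe, mul_add, mul_one, add_mul,
      one_mul, sum_mul_single, add_zero, Finset.sum_insert he, add_assoc, add_comm (single _ _ _)]

lemma mem_elementarySubgroup_of_sub_one {p : ι → Prop} {u : SpecialLinearGroup ι R}
    (hzero : ∀ i j, ¬(p i ∧ ¬p j) → (u - 1 : Matrix ι ι R) i j = 0)
    (hA : ∀ i j, p i → ¬p j → (u - 1 : Matrix ι ι R) i j ∈ A) : u ∈ elementarySubgroup ι A := by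
  classical
  obtain ⟨v, hv, hvu⟩ := exists_mem_elementarySubgroup_coe_eq_one_add_sum_single
    {e : ι × ι | p e.1 ∧ ¬p e.2} (fun e he => (Finset.mem_filter.1 he).2)
    (fun e he => hA _ _ (Finset.mem_filter.1 he).2.1 (Finset.mem_filter.1 he).2.2)
  have sum_eq : ∑ e : ι × ι with p e.1 ∧ ¬p e.2, single e.1 e.2 ((u - 1 : Matrix ι ι R) e.1 e.2) =
      (u - 1 : Matrix ι ι R) := by
    rw [Finset.sum_filter_of_ne, Fintype.sum_prod_type]
    · exact (matrix_eq_sum_single _).symm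
    · exact fun e _ he => not_not.1 fun h => he (by rw [hzero _ _ h, single_zero])
  rwa [show u = v from Subtype.ext (by rw [hvu, sum_eq, add_sub_cancel])]

lemma transvection_mem_conj_transvection_smul {a b i j : ι} (hab : a ≠ b) (hij : i ≠ j)
    (hne : i ≠ b ∨ j ≠ a) {q s : R} (hs : s ∈ A) (hqs : q * s ∈ A) :
    SpecialLinearGroup.transvection hij s ∈
      conj (SpecialLinearGroup.transvection hab q) • elementarySubgroup ι A := by
  refine mem_conj_smul_of_commutator_mem (transvection_mem_elementarySubgroup hij hs) ?_
  rw [transvection_inv, transvection_inv]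
  by_cases hja : j = a
  · subst hja
    have hib : i ≠ b := hne.resolve_right (by simp)
    rw [commutator_transvection_transvection hij hab hib, neg_mul_neg, mul_comm]
    exact transvection_mem_elementarySubgroup hib hqs
  by_cases hib : i = b
  · subst hib
    rw [← commutatorElement_inv, commutator_transvection_transvection hab hij (Ne.symm hja),
      neg_mul_neg]
    exact inv_mem (transvection_mem_elementarySubgroup _ hqs)
  · rw [(commute_transvection_transvection hij hab hja hib _ _).commutator_eq]
    exact one_mem _

lemma elementarySubgroup_sq_le_conj_transvection_smul (hι : 3 ≤ Fintype.card ι) {a b : ι}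
    (hab : a ≠ b) {q : R} {d : ℕ} (hd : (d : R) ∈ A) (hqd : q * d ∈ A) :
    elementarySubgroup ι (AddSubgroup.zmultiples ((d ^ 2 : ℕ) : R)) ≤
      conj (SpecialLinearGroup.transvection hab q) • elementarySubgroup ι A := by
  rw [elementarySubgroup_le_iff]
  rintro i j hij _ ⟨z, rfl⟩
  beta_reduce
  have coeff_eq : z • ((d ^ 2 : ℕ) : R) = d * (z • d) := by
    rw [Nat.cast_pow, sq, mul_smul_comm]
  have hdz : d * (z • (d : R)) ∈ A := by
    simpa [nsmul_eq_mul] using nsmul_mem (zsmul_mem hd z) d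
  by_cases hne : i ≠ b ∨ j ≠ a
  · have hqdz : q * (d * (z • (d : R))) ∈ A := by
      simpa [mul_left_comm, nsmul_eq_mul] using nsmul_mem (zsmul_mem hqd z) d
    rw [coeff_eq]
    exact transvection_mem_conj_transvection_smul hab hij hne hdz hqdz
  · obtain ⟨rfl, rfl⟩ : i = b ∧ j = a := by simpa using hne
    obtain ⟨c, -, hc⟩ := Finset.exists_mem_notMem_of_card_lt_card
      (Finset.card_le_two.trans_lt hι : Finset.card {i, j} < Finset.univ.card)
    obtain ⟨hci, hcj⟩ : c ≠ i ∧ c ≠ j := by simpa using hc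
    have left_mem : SpecialLinearGroup.transvection hci.symm (d : R) ∈
        conj (SpecialLinearGroup.transvection hab q) • elementarySubgroup ι A :=
      transvection_mem_conj_transvection_smul hab _ (.inr hcj) hd hqd
    have right_mem : SpecialLinearGroup.transvection hcj (z • (d : R)) ∈
        conj (SpecialLinearGroup.transvection hab q) • elementarySubgroup ι A :=
      transvection_mem_conj_transvection_smul hab _ (.inl hci) (zsmul_mem hd z)
        (by simpa only [mul_smul_comm] using zsmul_mem hqd z)
    rw [coeff_eq, ← commutator_transvection_transvection hci.symm hcj hij]
    exact Subgroup.commutator_le_self _ (Subgroup.commutator_mem_commutator left_mem right_mem)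

end ElementarySubgroup

section Parabolic

variable {ι R : Type*} [Fintype ι] [DecidableEq ι] [CommRing R]

lemma mul_single_mul_apply (M N : Matrix ι ι R) (a b i j : ι) (q : R) :
    (M * single a b q * N) i j = M i a * q * N b j := by
  rw [Matrix.mul_apply, Finset.sum_eq_single b]
  · rw [mul_single_apply_same]
  · exact fun k _ hk => by simp [hk]
  · simp

lemma coe_commutator_inv_transvection_inv {a b : ι} (hab : a ≠ b) (q : R)
    {g : SpecialLinearGroup ι R} (hba : g b a = 0) :
    ((⁅g⁻¹, (SpecialLinearGroup.transvection hab q)⁻¹⁆ : SpecialLinearGroup ι R) :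
        Matrix ι ι R) = 1 + (single a b q - (g⁻¹ : SpecialLinearGroup ι R) * single a b q * g) := by
  have hsingle : single a b q * g * single a b q = 0 := by
    rw [single_mul_mul_single, hba, mul_zero, zero_mul, single_zero]
  have hinv : ((g⁻¹ : SpecialLinearGroup ι R) : Matrix ι ι R) * g = 1 := by
    rw [← Matrix.SpecialLinearGroup.coe_mul, inv_mul_cancel, Matrix.SpecialLinearGroup.coe_one]
  simp only [commutatorElement_def, inv_inv, transvection_inv, Matrix.SpecialLinearGroup.coe_mul,
    transvection_coe, ← Matrix.single_neg, mul_add, add_mul, mul_one, neg_mul, mul_neg, hinv]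
  rw [mul_assoc _ _ (g : Matrix ι ι R), mul_assoc _ _ (single a b q), hsingle, mul_zero, neg_zero,
    one_mul]
  abel

lemma coe_commutator_inv_transvection_inv_sub_one_apply {a b : ι} (hab : a ≠ b) (q : R)
    {g : SpecialLinearGroup ι R} (hba : g b a = 0) (i j : ι) :
    (⁅g⁻¹, (SpecialLinearGroup.transvection hab q)⁻¹⁆ - 1 : Matrix ι ι R) i j =
      q * ((1 : Matrix ι ι R) i a * (1 : Matrix ι ι R) b j - g⁻¹ i a * g b j) := by
  have single_eq : single a b q = (1 * single a b q * 1 : Matrix ι ι R) := by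
    rw [one_mul, mul_one]
  rw [coe_commutator_inv_transvection_inv hab q hba, add_sub_cancel_left, Matrix.sub_apply,
    mul_single_mul_apply, single_eq, mul_single_mul_apply]
  ring

lemma inv_apply_eq_zero_of_block {p : ι → Prop} {g : SpecialLinearGroup ι R}
    (hg : ∀ i j, ¬p i → p j → g i j = 0) {i j : ι} (hi : ¬p i) (hj : p j) : g⁻¹ i j = 0 := by
  have triangular : BlockTriangular (g : Matrix ι ι R) (fun i => ¬p i) := fun i j hij => by
    obtain ⟨hi, hj⟩ : ¬p i ∧ p j := by simpa using hij.not_ge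
    exact hg i j hi hj
  have : Invertible (g : Matrix ι ι R) := invertibleOfIsUnitDet _ (by simp)
  have coe_inv : (g : Matrix ι ι R)⁻¹ = (g⁻¹ : SpecialLinearGroup ι R) :=
    inv_eq_left_inv (by rw [← Matrix.SpecialLinearGroup.coe_mul, inv_mul_cancel,
      Matrix.SpecialLinearGroup.coe_one])
  rw [← coe_inv]
  exact blockTriangular_inv_of_blockTriangular triangular (by simp [lt_iff_le_not_ge, hi, hj])

lemma dvd_apply_mul_apply_sub_of_map_eq_one {l : ℕ} {g h : SpecialLinearGroup ι ℤ}
    (hg : SpecialLinearGroup.map (Int.castRingHom (ZMod l)) g = 1)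
    (hh : SpecialLinearGroup.map (Int.castRingHom (ZMod l)) h = 1) (i j i' j' : ι) :
    (l : ℤ) ∣ (1 : Matrix ι ι ℤ) i j * (1 : Matrix ι ι ℤ) i' j' - g i j * h i' j' := by
  rw [← ZMod.intCast_zmod_eq_zero_iff_dvd]
  have cast_eq {u : SpecialLinearGroup ι ℤ}
      (hu : SpecialLinearGroup.map (Int.castRingHom (ZMod l)) u = 1) (i j : ι) :
      (u i j : ZMod l) = ((1 : Matrix ι ι ℤ) i j : ℤ) := by
    have := congrFun₂ (congrArg Subtype.val hu) i j
    simpa [Matrix.one_apply] using this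
  push_cast
  rw [cast_eq hg, cast_eq hh, sub_self]

lemma commutator_inv_transvection_inv_mem_elementarySubgroup {A : AddSubgroup R} {p : ι → Prop}
    {a b : ι} (hab : a ≠ b) (ha : p a) (hb : ¬p b) {q : R} {l : ℕ} (hql : q * l ∈ A)
    {g : SpecialLinearGroup ι ℤ} (hblock : ∀ i j, ¬p i → p j → g i j = 0)
    (hg : SpecialLinearGroup.map (Int.castRingHom (ZMod l)) g = 1) :
    ⁅(SpecialLinearGroup.map (Int.castRingHom R) g)⁻¹,
      (SpecialLinearGroup.transvection hab q)⁻¹⁆ ∈ elementarySubgroup ι A := by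
  have hg' : SpecialLinearGroup.map (Int.castRingHom (ZMod l)) g⁻¹ = 1 := by
    rw [map_inv, hg, inv_one]
  have entry (i j : ι) :
      (⁅(SpecialLinearGroup.map (Int.castRingHom R) g)⁻¹,
        (SpecialLinearGroup.transvection hab q)⁻¹⁆ - 1 : Matrix ι ι R) i j =
      q * ((1 : Matrix ι ι ℤ) i a * (1 : Matrix ι ι ℤ) b j - g⁻¹ i a * g b j : ℤ) := by
    rw [coe_commutator_inv_transvection_inv_sub_one_apply hab q (by simp [hblock b a hb ha]),
      ← map_inv]
    simp [Matrix.one_apply, -Matrix.SpecialLinearGroup.coe_inv, -map_inv]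
  refine mem_elementarySubgroup_of_sub_one (p := p) (fun i j hij => ?_) (fun i j _ _ => ?_)
  · rw [entry]
    obtain hi | hj : ¬p i ∨ p j := by tauto
    · have hia : i ≠ a := fun h => hi (h ▸ ha)
      simp [inv_apply_eq_zero_of_block hblock hi ha, hia]
    · have hbj : b ≠ j := fun h => hb (h ▸ hj)
      simp [hblock b j hb hj, hbj]
  · obtain ⟨z, hz⟩ := dvd_apply_mul_apply_sub_of_map_eq_one hg' hg i a b j
    rw [entry, hz]
    simpa [mul_comm, mul_left_comm] using zsmul_mem hql z

end Parabolic

section BlockCongruence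

variable {ι R : Type*} [Fintype ι] [DecidableEq ι] [CommRing R]

lemma intCast_mem_zmultiples_natCast {k : ℕ} {z : ℤ} (hz : (k : ℤ) ∣ z) :
    (z : R) ∈ AddSubgroup.zmultiples (k : R) := by
  obtain ⟨t, rfl⟩ := hz
  exact ⟨t, by simp [mul_comm]⟩

lemma map_mem_elementarySubgroup_of_dvd {p : ι → Prop} {k : ℕ} {g : SpecialLinearGroup ι ℤ}
    (hone : ∀ i j, ¬(p i ∧ ¬p j) → g i j = if i = j then 1 else 0)
    (hdvd : ∀ i j, p i → ¬p j → (k : ℤ) ∣ g i j) :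
    SpecialLinearGroup.map (Int.castRingHom R) g ∈
      elementarySubgroup ι (AddSubgroup.zmultiples (k : R)) := by
  refine mem_elementarySubgroup_of_sub_one (p := p) (fun i j hij => ?_) (fun i j hi hj => ?_)
  · simp [hone i j hij, Matrix.one_apply]
  · have hne : i ≠ j := fun h => hj (h ▸ hi)
    simpa [hne] using intCast_mem_zmultiples_natCast (R := R) (hdvd i j hi hj)

end BlockCongruence

lemma det_submatrix_transvection {ι κ R : Type*} [DecidableEq ι] [Fintype κ] [DecidableEq κ]
    [CommRing R] {f : κ → ι} (hf : Function.Injective f) {i j : ι} (hij : i ≠ j) (c : R) :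
    ((Matrix.transvection i j c).submatrix f f).det = 1 := by
  by_cases hrange : i ∈ Set.range f ∧ j ∈ Set.range f
  · obtain ⟨⟨x, rfl⟩, ⟨y, rfl⟩⟩ := hrange
    have submatrix_eq :
        (Matrix.transvection (f x) (f y) c).submatrix f f = Matrix.transvection x y c := by
      ext
      simp [Matrix.transvection, Matrix.one_apply, single_apply, hf.eq_iff]
    rw [submatrix_eq, det_transvection_of_ne _ _ (fun h => hij (congrArg f h))]
  · have submatrix_eq : (Matrix.transvection i j c).submatrix f f = 1 := by
      ext x y
      have : ¬(i = f x ∧ j = f y) := fun ⟨hx, hy⟩ => hrange ⟨⟨x, hx.symm⟩, ⟨y, hy.symm⟩⟩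
      simp [Matrix.transvection, Matrix.one_apply, hf.eq_iff, this]
    rw [submatrix_eq, det_one]

section FgroupQ

variable {n m k : ℕ} {h : m ≤ n}

lemma map_mem_FgroupQ {g : SpecialLinearGroup (Fin n) ℤ}
    (hg : g ∈ Uplus n m k ∪ Uminus n m k ∪ Mblock n m k h) :
    SpecialLinearGroup.map (Int.castRingHom ℚ) g ∈ FgroupQ n m k h :=
  Subgroup.subset_closure ⟨g, hg, rfl⟩

lemma Mblock_subset_Mblock_of_dvd {l : ℕ} (hkl : k ∣ l) : Mblock n m l h ⊆ Mblock n m k h :=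
  fun _ ⟨hblock, hdvd, hdet, hdet'⟩ =>
    ⟨hblock, fun i j => (Int.natCast_dvd_natCast.2 hkl).trans (hdvd i j), hdet, hdet'⟩

lemma map_eq_one_of_mem_Mblock {g : SpecialLinearGroup (Fin n) ℤ} (hg : g ∈ Mblock n m k h) :
    SpecialLinearGroup.map (Int.castRingHom (ZMod k)) g = 1 := by
  ext i j
  have := (ZMod.intCast_zmod_eq_zero_iff_dvd _ k).2 (hg.2.1 i j)
  rw [Int.cast_sub, sub_eq_zero] at this
  simpa [Matrix.one_apply] using this

lemma transvection_mem_Mblock {i j : Fin n} (hij : i ≠ j) (hblock : (i : ℕ) < m ↔ (j : ℕ) < m)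
    {s : ℤ} (hs : (k : ℤ) ∣ s) : SpecialLinearGroup.transvection hij s ∈ Mblock n m k h := by
  refine ⟨fun x y hxy => ?_, fun x y => ?_,
    det_submatrix_transvection (Fin.castLE_injective h) hij s,
    det_submatrix_transvection (f := fun x : Fin (n - m) => (⟨m + x, by omega⟩ : Fin n))
      (fun x y hxy => by simpa [Fin.ext_iff] using hxy) hij s⟩
  · have hne : x ≠ y := fun e => hxy (e ▸ Iff.rfl)
    have hxy' : ¬(i = x ∧ j = y) := by rintro ⟨rfl, rfl⟩; exact hxy hblock
    simp [transvection_coe, hne, hxy']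
  · by_cases hxy : i = x ∧ j = y <;> simp [transvection_coe, Matrix.one_apply, hxy, hs]

lemma transvection_mem_Uplus {i j : Fin n} (hij : i ≠ j) (hi : (i : ℕ) < m) (hj : m ≤ (j : ℕ))
    {s : ℤ} (hs : (k : ℤ) ∣ s) : SpecialLinearGroup.transvection hij s ∈ Uplus n m k := by
  intro x y
  have := dvd_zero (k : ℤ)
  simp only [transvection_coe, Matrix.add_apply, Matrix.one_apply, single_apply]
  grind

lemma transvection_mem_Uminus {i j : Fin n} (hij : i ≠ j) (hi : m ≤ (i : ℕ)) (hj : (j : ℕ) < m)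
    {s : ℤ} (hs : (k : ℤ) ∣ s) : SpecialLinearGroup.transvection hij s ∈ Uminus n m k := by
  intro x y
  have := dvd_zero (k : ℤ)
  simp only [transvection_coe, Matrix.add_apply, Matrix.one_apply, single_apply]
  grind

lemma elementarySubgroup_le_FgroupQ :
    elementarySubgroup (Fin n) (AddSubgroup.zmultiples (k : ℚ)) ≤ FgroupQ n m k h := by
  rw [elementarySubgroup_le_iff]
  rintro i j hij _ ⟨z, rfl⟩
  have hdvd : (k : ℤ) ∣ z * k := dvd_mul_left _ _
  have map_eq : SpecialLinearGroup.map (Int.castRingHom ℚ)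
      (SpecialLinearGroup.transvection hij (z * k)) =
      SpecialLinearGroup.transvection hij (z • (k : ℚ)) := by
    rw [map_transvection]
    simp
  beta_reduce
  rw [← map_eq]
  apply map_mem_FgroupQ
  by_cases hblock : (i : ℕ) < m ↔ (j : ℕ) < m
  · exact .inr (transvection_mem_Mblock hij hblock hdvd)
  by_cases hi : (i : ℕ) < m
  · exact .inl (.inl (transvection_mem_Uplus hij hi (by omega) hdvd))
  · exact .inl (.inr (transvection_mem_Uminus hij (by omega) (by omega) hdvd))

lemma FgroupQ_le {H : Subgroup (SpecialLinearGroup (Fin n) ℚ)}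
    (hE : elementarySubgroup (Fin n) (AddSubgroup.zmultiples (k : ℚ)) ≤ H)
    (hM : ∀ g ∈ Mblock n m k h, SpecialLinearGroup.map (Int.castRingHom ℚ) g ∈ H) :
    FgroupQ n m k h ≤ H := by
  rw [FgroupQ, Subgroup.closure_le]
  rintro _ ⟨g, (hg | hg) | hg, rfl⟩
  · refine hE (map_mem_elementarySubgroup_of_dvd (p := fun i : Fin n => (i : ℕ) < m) ?_ ?_) <;>
    · intro i j
      have := hg i j
      grind
  · refine hE (map_mem_elementarySubgroup_of_dvd (p := fun i : Fin n => m ≤ (i : ℕ)) ?_ ?_) <;>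
    · intro i j
      have := hg i j
      grind
  · exact hM g hg

lemma FgroupQ_le_conj_transvection_smul (hn : 3 ≤ n) {a b : Fin n} (hab : a ≠ b)
    (hcross : ¬((a : ℕ) < m ↔ (b : ℕ) < m)) (q : ℚ) :
    FgroupQ n m ((k * q.den) ^ 2) h ≤
      conj (SpecialLinearGroup.transvection hab q) • FgroupQ n m k h := by
  have hd : ((k * q.den : ℕ) : ℚ) ∈ AddSubgroup.zmultiples (k : ℚ) := ⟨q.den, by simp [mul_comm]⟩
  have hqd : q * (k * q.den : ℕ) ∈ AddSubgroup.zmultiples (k : ℚ) :=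
    ⟨q.num, by
      simp only [zsmul_eq_mul, ← Rat.den_mul_eq_num, Nat.cast_mul]; ring⟩
  refine FgroupQ_le ?_ fun g hg => ?_
  · exact (elementarySubgroup_sq_le_conj_transvection_smul (by simpa using hn) hab hd hqd).trans
      (Subgroup.pointwise_smul_le_pointwise_smul_iff.2 elementarySubgroup_le_FgroupQ)
  · have hql : q * ((k * q.den) ^ 2 : ℕ) ∈ AddSubgroup.zmultiples (k : ℚ) := by
      rw [sq, Nat.cast_mul, ← mul_assoc, mul_comm, ← nsmul_eq_mul]
      exact nsmul_mem hqd _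
    have hdvd : k ∣ (k * q.den) ^ 2 := (dvd_mul_right _ _).trans (dvd_pow_self _ two_ne_zero)
    have hgk := map_mem_FgroupQ (.inr (Mblock_subset_Mblock_of_dvd hdvd hg))
    refine mem_conj_smul_of_commutator_mem hgk ?_
    exact elementarySubgroup_le_FgroupQ <| commutator_inv_transvection_inv_mem_elementarySubgroup
      (p := fun i : Fin n => (i : ℕ) < m ↔ (a : ℕ) < m) hab Iff.rfl (by tauto) hql
      (fun i j hi hj => hg.1 i j (by tauto)) (map_eq_one_of_mem_Mblock hg)

lemma transvection_mem_conjAbsorbing_of_cross (hn : 3 ≤ n) {a b : Fin n} (hab : a ≠ b)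
    (hcross : ¬((a : ℕ) < m ↔ (b : ℕ) < m)) (q : ℚ) :
    SpecialLinearGroup.transvection hab q ∈ conjAbsorbing (fun k => FgroupQ n m k h) :=
  fun k hk => ⟨(k * q.den) ^ 2, Nat.one_le_pow _ _ (Nat.mul_pos hk q.den_pos),
    FgroupQ_le_conj_transvection_smul hn hab hcross q⟩

lemma transvection_mem_conjAbsorbing (hn : 3 ≤ n) (hm : 1 ≤ m) (hmn : m < n) {i j : Fin n}
    (hij : i ≠ j) (q : ℚ) :
    SpecialLinearGroup.transvection hij q ∈ conjAbsorbing (fun k => FgroupQ n m k hmn.le) := by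
  by_cases hblock : (i : ℕ) < m ↔ (j : ℕ) < m
  · obtain ⟨c, hc⟩ : ∃ c : Fin n, ¬((i : ℕ) < m ↔ (c : ℕ) < m) := by
      by_cases hi : (i : ℕ) < m
      · exact ⟨⟨m, hmn⟩, by simp [hi]⟩
      · exact ⟨⟨0, by omega⟩, by simp [hi]; omega⟩
    have hic : i ≠ c := fun e => hc (e ▸ Iff.rfl)
    have hcj : c ≠ j := fun e => hc (e ▸ hblock)
    have hc' : ¬((c : ℕ) < m ↔ (j : ℕ) < m) := by tauto
    rw [← mul_one q, ← commutator_transvection_transvection hic hcj hij, commutatorElement_def,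
      transvection_inv, transvection_inv]
    have left_mem := transvection_mem_conjAbsorbing_of_cross (h := hmn.le) hn hic hc
    have right_mem := transvection_mem_conjAbsorbing_of_cross (h := hmn.le) hn hcj hc'
    exact mul_mem (mul_mem (mul_mem (left_mem _) (right_mem _)) (left_mem _)) (right_mem _)
  · exact transvection_mem_conjAbsorbing_of_cross hn hij hblock q

end FgroupQ

/-- For `n ≥ 3`, `1 ≤ m < n`, every `x ∈ SL_n(ℚ)` and every `k ≥ 1`, there
exists `l = l(k,x) ≥ 1` such that `x·F(k)·x⁻¹ ⊇ F(l)`. -/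
theorem conjugate_of_F_contains_some_F (n m : ℕ) (hn : 3 ≤ n) (hm : 1 ≤ m) (hmn : m < n) :
    ∀ (x : Matrix.SpecialLinearGroup (Fin n) ℚ) (k : ℕ), 1 ≤ k →
      ∃ l : ℕ, 1 ≤ l ∧
        (FgroupQ n m l hmn.le : Set (Matrix.SpecialLinearGroup (Fin n) ℚ)) ⊆
          (fun h => x * h * x⁻¹) '' (FgroupQ n m k hmn.le : Set (Matrix.SpecialLinearGroup (Fin n) ℚ)) := by
  have : Nontrivial (Fin n) := Fin.nontrivial_iff_two_le.2 (by omega)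
  have mem_conjAbsorbing (x : SpecialLinearGroup (Fin n) ℚ) :
      x ∈ conjAbsorbing (fun k => FgroupQ n m k hmn.le) :=
    specialLinearGroup_transvection_induction
      (fun _ _ hij q => transvection_mem_conjAbsorbing hn hm hmn hij q)
      (fun _ _ hx hy => mul_mem hx hy) x
  exact mem_conjAbsorbing
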